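/- arXiv:1608.07021 — 2 statements merged into one kernel-verified Lean document; each statement's English description precedes it below -/
import Mathlib

section
/- A set function f : 2^N → ℝ ∪ {-∞} with dom f ≠ ∅ is M♮-concave if and only if dom f satisfies (B♮-EXC) and f satisfies the following three local conditions: (1) f(X + i + j) + f(X) ≤ f(X + i) + f(X + j) for all X ⊆ N and distinct i, j ∈ N \ X; (2) f(X + i + j) + f(X + k) ≤ max[ f(X + i + k) + f(X + j), f(X + j + k) + f(X + i) ] for all X ⊆ N and distinct i, j, k ∈ N \ X; (3) f(X + i + j) + f(X + k + l) ≤ max[ f(X + i + k) + f(X + j + l), f(X + j + k) + f(X + i + l) ] for all X ⊆ N and distinct i, j, k, l ∈ N \ X. -/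
open Finset

/-- (M♮-EXC): exchange property for set functions into ℝ ∪ {-∞}. -/
def MExc {N : Type*} [DecidableEq N] (f : Finset N → WithBot ℝ) : Prop :=
  ∀ X Y : Finset N, ∀ i ∈ X \ Y,
    f X + f Y ≤ max (f (X.erase i) + f (insert i Y))
      ((Y \ X).sup fun j => f (insert j (X.erase i)) + f ((insert i Y).erase j))

/-- (B♮-EXC): exchange property for set families. -/
def BExc {N : Type*} [DecidableEq N] (F : Set (Finset N)) : Prop :=
  ∀ X ∈ F, ∀ Y ∈ F, ∀ i ∈ X \ Y,
    (X.erase i ∈ F ∧ insert i Y ∈ F) ∨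
      ∃ j ∈ Y \ X, insert j (X.erase i) ∈ F ∧ (insert i Y).erase j ∈ F

/-- To bound `f X + f Y` under (M♮-EXC), it suffices to bound every outcome of an exchange. -/
lemma MExc.add_le {N : Type*} [DecidableEq N] {f : Finset N → WithBot ℝ} (hf : MExc f)
    {X Y : Finset N} {i : N} {t : WithBot ℝ} (hiX : i ∈ X) (hiY : i ∉ Y)
    (h : f (X.erase i) + f (insert i Y) ≤ t)
    (h' : ∀ j ∈ Y, j ∉ X → f (insert j (X.erase i)) + f ((insert i Y).erase j) ≤ t) :
    f X + f Y ≤ t := by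
  refine (hf X Y i (by simp [hiX, hiY])).trans (max_le h (Finset.sup_le fun j hj => ?_))
  rw [mem_sdiff] at hj
  exact h' j hj.1 hj.2

lemma MExc.bExc_dom {N : Type*} [DecidableEq N] {f : Finset N → WithBot ℝ} (hf : MExc f) :
    BExc {X : Finset N | f X ≠ ⊥} := by
  intro X hX Y hY i hi
  rw [mem_sdiff] at hi
  by_contra! hne
  simp only [Set.mem_ofPred_eq] at hX hY hne
  have hle : f X + f Y ≤ ⊥ := by
    refine hf.add_le hi.1 hi.2 ?_ fun j hjY hjX => ?_
    · rw [le_bot_iff, WithBot.add_eq_bot]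
      by_contra! h
      exact hne.1 h.1 h.2
    · rw [le_bot_iff, WithBot.add_eq_bot]
      by_contra! h
      exact hne.2 j (mem_sdiff.2 ⟨hjY, hjX⟩) h.1 h.2
  rw [le_bot_iff, WithBot.add_eq_bot] at hle
  tauto

lemma MExc.insert_insert_add_le {N : Type*} [DecidableEq N] {f : Finset N → WithBot ℝ}
    (hf : MExc f) {X : Finset N} {i j : N} (hi : i ∉ X) (hij : i ≠ j) :
    f (insert j (insert i X)) + f X ≤ f (insert i X) + f (insert j X) := by
  refine hf.add_le (i := i) (by simp) hi ?_ fun k hk hk' => ?_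
  · rw [show (insert j (insert i X)).erase i = insert j X by grind, add_comm]
  · grind

lemma MExc.insert_insert_add_insert_le {N : Type*} [DecidableEq N] {f : Finset N → WithBot ℝ}
    (hf : MExc f) {X : Finset N} {i j k : N} (hi : i ∉ X) (hk : k ∉ X)
    (hij : i ≠ j) (hik : i ≠ k) (hjk : j ≠ k) :
    f (insert j (insert i X)) + f (insert k X) ≤
      max (f (insert k (insert i X)) + f (insert j X))
        (f (insert k (insert j X)) + f (insert i X)) := by
  refine hf.add_le (i := i) (by simp) (by grind) (le_max_of_le_left ?_)
    fun l hl hl' => le_max_of_le_right ?_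
  · rw [show (insert j (insert i X)).erase i = insert j X by grind, Finset.insert_comm i k,
      add_comm]
  · obtain rfl : l = k := by grind
    rw [show (insert j (insert i X)).erase i = insert j X by grind,
      show (insert i (insert l X)).erase l = insert i X by grind]

lemma withBot_add_le_max_of_le {x y p q r s a b c d : WithBot ℝ} (h₁ : x + y ≤ p + q)
    (h₂ : x + y ≤ r + s) (h₃ : q + r ≤ a + b) (h₄ : s + p ≤ c + d) :
    x + y ≤ max (a + d) (c + b) := by
  by_cases hxy : x + y = ⊥
  · simp [hxy]
  have h₁' := ne_bot_of_le_ne_bot hxy h₁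
  have h₂' := ne_bot_of_le_ne_bot hxy h₂
  simp only [WithBot.add_ne_bot] at hxy h₁' h₂'
  have h₃' := ne_bot_of_le_ne_bot (WithBot.add_ne_bot.2 ⟨h₁'.2, h₂'.1⟩) h₃
  have h₄' := ne_bot_of_le_ne_bot (WithBot.add_ne_bot.2 ⟨h₂'.2, h₁'.1⟩) h₄
  simp only [WithBot.add_ne_bot] at h₃' h₄'
  obtain ⟨⟨hx, hy⟩, ⟨hp, hq⟩, ⟨hr, hs⟩, ⟨ha, hb⟩, hc, hd⟩ := hxy, h₁', h₂', h₃', h₄'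
  lift x to ℝ using hx
  lift y to ℝ using hy
  lift p to ℝ using hp
  lift q to ℝ using hq
  lift r to ℝ using hr
  lift s to ℝ using hs
  lift a to ℝ using ha
  lift b to ℝ using hb
  lift c to ℝ using hc
  lift d to ℝ using hd
  norm_cast at *
  rw [le_max_iff]
  by_contra! h
  linarith [h.1, h.2]

lemma MExc.insert_insert_add_insert_insert_le {N : Type*} [DecidableEq N]
    {f : Finset N → WithBot ℝ} (hf : MExc f) {X : Finset N} {i j k l : N}
    (hi : i ∉ X) (hj : j ∉ X) (hk : k ∉ X) (hl : l ∉ X)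
    (hij : i ≠ j) (hik : i ≠ k) (hil : i ≠ l) (hjk : j ≠ k) (hjl : j ≠ l) (hkl : k ≠ l) :
    f (insert j (insert i X)) + f (insert l (insert k X)) ≤
      max (f (insert k (insert i X)) + f (insert l (insert j X)))
        (f (insert k (insert j X)) + f (insert l (insert i X))) := by
  by_contra! hlt
  have hle : ∀ {t}, f (insert j (insert i X)) + f (insert l (insert k X)) ≤
      max t (max (f (insert k (insert i X)) + f (insert l (insert j X)))
        (f (insert k (insert j X)) + f (insert l (insert i X)))) →
      f (insert j (insert i X)) + f (insert l (insert k X)) ≤ t := fun h =>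
    (le_max_iff.1 h).resolve_right hlt.not_ge
  have h₁ : f (insert j (insert i X)) + f (insert l (insert k X)) ≤
      f (insert j X) + f (insert l (insert k (insert i X))) := by
    refine hle (hf.add_le (i := i) (by simp) (by grind) (le_max_of_le_left ?_)
      fun m hm hm' => le_max_of_le_right ?_)
    · rw [show (insert j (insert i X)).erase i = insert j X by grind,
        show insert i (insert l (insert k X)) = insert l (insert k (insert i X)) by grind]
    · obtain rfl | rfl : m = k ∨ m = l := by grind
      · rw [show (insert j (insert i X)).erase i = insert j X by grind,
          show (insert i (insert l (insert m X))).erase m = insert l (insert i X) by grind]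
        exact le_max_right _ _
      · rw [show (insert j (insert i X)).erase i = insert j X by grind,
          show (insert i (insert m (insert k X))).erase m = insert k (insert i X) by grind,
          add_comm]
        exact le_max_left _ _
  have h₂ : f (insert j (insert i X)) + f (insert l (insert k X)) ≤
      f (insert i X) + f (insert l (insert k (insert j X))) := by
    refine hle (hf.add_le (i := j) (by simp) (by grind) (le_max_of_le_left ?_)
      fun m hm hm' => le_max_of_le_right ?_)
    · rw [show (insert j (insert i X)).erase j = insert i X by grind,
        show insert j (insert l (insert k X)) = insert l (insert k (insert j X)) by grind]
    · obtain rfl | rfl : m = k ∨ m = l := by grind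
      · rw [show (insert j (insert i X)).erase j = insert i X by grind,
          show (insert j (insert l (insert m X))).erase m = insert l (insert j X) by grind]
        exact le_max_left _ _
      · rw [show (insert j (insert i X)).erase j = insert i X by grind,
          show (insert j (insert m (insert k X))).erase m = insert k (insert j X) by grind,
          add_comm]
        exact le_max_right _ _
  exact hlt.not_ge (withBot_add_le_max_of_le h₁ h₂
    (hf.insert_insert_add_le (X := insert i X) (i := k) (j := l) (by grind) hkl)
    (hf.insert_insert_add_le (X := insert j X) (i := k) (j := l) (by grind) hkl))

lemma eq_of_sdiff_eq_singleton {E : Type*} [DecidableEq E] {A B : Finset E} {u v : E}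
    (hcard : #A = #B) (hu : A \ B = {u}) (hv : v ∈ B \ A) :
    insert v (A.erase u) = B ∧ (insert u B).erase v = A := by
  have hBA : #(B \ A) = 1 := by rw [← card_sdiff_comm hcard, hu, card_singleton]
  obtain ⟨v', hv'⟩ := card_eq_one.1 hBA
  obtain rfl : v = v' := by rwa [hv', mem_singleton] at hv
  have hA : ∀ x, x ∈ A ∧ x ∉ B ↔ x = u := fun x => by rw [← mem_sdiff, hu, mem_singleton]
  have hB : ∀ x, x ∈ B ∧ x ∉ A ↔ x = v := fun x => by rw [← mem_sdiff, hv', mem_singleton]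
  clear hcard hBA hu hv' hv
  constructor <;> ext x <;> have := hA x <;> have := hB x <;> have := hA u <;> have := hB v <;>
    simp only [mem_insert, mem_erase] <;> grind

lemma sdiff_erase_insert_ssubset {E : Type*} [DecidableEq E] {A B : Finset E} {u v : E}
    (huA : u ∈ A) (huB : u ∉ B) (hv : v ∉ A) : A \ (insert u B).erase v ⊂ A \ B := by
  rw [Finset.ssubset_iff_of_subset (by grind)]
  exact ⟨u, by grind, by grind⟩

lemma BExc.exists_erase_mem {N : Type*} [DecidableEq N] {F : Set (Finset N)} (hF : BExc F)
    {X Y : Finset N} (hX : X ∈ F) (hY : Y ∈ F) (hcard : #X < #Y) :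
    ∃ j ∈ Y \ X, Y.erase j ∈ F := by
  induction hn : #(Y \ X) using Nat.strong_induction_on generalizing X with
  | _ n ih =>
    obtain ⟨i, hiY, hiX⟩ := exists_mem_notMem_of_card_lt_card hcard
    obtain h | ⟨j, hj, -, h⟩ := hF Y hY X hX i (by simp [hiX, hiY])
    · exact ⟨i, by simp [hiX, hiY], h.1⟩
    · rw [mem_sdiff] at hj
      have hcard' : #((insert i X).erase j) = #X := by
        rw [card_erase_of_mem (by simp [hj.1]), card_insert_of_notMem hiX, Nat.add_sub_cancel]
      have hsub := sdiff_erase_insert_ssubset hiY hiX hj.2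
      obtain ⟨k, hk, hkF⟩ := ih _ (hn ▸ card_lt_card hsub) h (hcard' ▸ hcard) rfl
      exact ⟨k, hsub.subset hk, hkF⟩

lemma withBot_exists_potential {x y : WithBot ℝ} {a b : ℝ} (h : x + y < a + b) :
    ∃ p : ℝ, (x ≠ ⊥ → x + p = a) ∧ y < b + p := by
  induction x using WithBot.recBotCoe with
  | bot =>
    induction y using WithBot.recBotCoe with
    | bot => exact ⟨0, by simp, by simp⟩
    | coe y => exact ⟨y - b + 1, by simp, by norm_cast; linarith⟩
  | coe x =>
    refine ⟨a - x, fun _ => by norm_cast; ring, ?_⟩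
    induction y using WithBot.recBotCoe with
    | bot => norm_cast; exact WithBot.bot_lt_coe _
    | coe y => norm_cast at h ⊢; linarith

/-- The local exchange inequality, seen from one of the two sets involved. -/
lemma add_le_max_of_local_exchange {E : Type*} [DecidableEq E] {g : Finset E → WithBot ℝ}
    (hloc : ∀ W : Finset E, ∀ i ∉ W, ∀ j ∉ W, ∀ k ∉ W, ∀ l ∉ W,
      i ≠ j → i ≠ k → i ≠ l → j ≠ k → j ≠ l → k ≠ l →
      g (insert j (insert i W)) + g (insert l (insert k W)) ≤
        max (g (insert k (insert i W)) + g (insert l (insert j W)))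
          (g (insert k (insert j W)) + g (insert l (insert i W))))
    {B : Finset E} {v v' w w' : E} (hv : v ∈ B) (hv' : v' ∈ B) (hvv' : v ≠ v')
    (hw : w ∉ B) (hw' : w' ∉ B) (hww' : w ≠ w') :
    g B + g ((insert w' ((insert w B).erase v)).erase v') ≤
      max (g ((insert w B).erase v') + g ((insert w' B).erase v))
        (g ((insert w B).erase v) + g ((insert w' B).erase v')) := by
  have h := hloc ((B.erase v).erase v') v (by simp) v' (by simp) w (by simp [hw]) w' (by simp [hw'])
    hvv' (by grind) (by grind) (by grind) (by grind) hww'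
  clear hloc
  rwa [show insert v' (insert v ((B.erase v).erase v')) = B by grind,
    show insert w' (insert w ((B.erase v).erase v')) =
      (insert w' ((insert w B).erase v)).erase v' by grind,
    show insert w (insert v ((B.erase v).erase v')) = (insert w B).erase v' by grind,
    show insert w' (insert v' ((B.erase v).erase v')) = (insert w' B).erase v by grind,
    show insert w (insert v' ((B.erase v).erase v')) = (insert w B).erase v by grind,
    show insert w' (insert v ((B.erase v).erase v')) = (insert w' B).erase v' by grind] at h

/-- Local-to-global principle for valuated matroids: the three-term exchange inequality, together
with a one-sided exchange property of the effective domain, gives the full exchange property. -/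
theorem exists_add_le_of_local_exchange {E : Type*} [DecidableEq E] {g : Finset E → WithBot ℝ}
    (hloc : ∀ W : Finset E, ∀ i ∉ W, ∀ j ∉ W, ∀ k ∉ W, ∀ l ∉ W,
      i ≠ j → i ≠ k → i ≠ l → j ≠ k → j ≠ l → k ≠ l →
      g (insert j (insert i W)) + g (insert l (insert k W)) ≤
        max (g (insert k (insert i W)) + g (insert l (insert j W)))
          (g (insert k (insert j W)) + g (insert l (insert i W))))
    (hdom : ∀ A B : Finset E, g A ≠ ⊥ → g B ≠ ⊥ → #A = #B → ∀ u ∈ A \ B,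
      ∃ v ∈ B \ A, g ((insert u B).erase v) ≠ ⊥)
    {A B : Finset E} (hcard : #A = #B) {u : E} (hu : u ∈ A \ B) :
    ∃ v ∈ B \ A, g A + g B ≤ g (insert v (A.erase u)) + g ((insert u B).erase v) := by
  induction hn : #(A \ B) using Nat.strong_induction_on generalizing B with
  | _ n ih =>
    by_contra! hlt
    have hne : (B \ A).Nonempty := by
      rw [← card_pos, ← card_sdiff_comm hcard, card_pos]
      exact ⟨u, hu⟩
    obtain ⟨hA, hB⟩ : g A ≠ ⊥ ∧ g B ≠ ⊥ := by
      obtain ⟨v, hv⟩ := hne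
      exact WithBot.add_ne_bot.1 (hlt v hv).ne_bot
    obtain ⟨a, ha⟩ := WithBot.ne_bot_iff_exists.1 hA
    obtain ⟨b, hb⟩ := WithBot.ne_bot_iff_exists.1 hB
    have hp : ∀ v, ∃ p : ℝ, v ∈ B \ A →
        (g (insert v (A.erase u)) ≠ ⊥ → g (insert v (A.erase u)) + p = a) ∧
          g ((insert u B).erase v) < b + p := by
      intro v
      by_cases hv : v ∈ B \ A
      · have h := hlt v hv
        rw [← ha, ← hb] at h
        obtain ⟨p, hp⟩ := withBot_exists_potential h
        exact ⟨p, fun _ => hp⟩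
      · exact ⟨0, fun h => absurd h hv⟩
    choose p hp using hp
    by_cases hsub : ∃ w ∈ A \ B, w ≠ u
    · obtain ⟨w, hw, hwu⟩ := hsub
      obtain ⟨v₀, hv₀, hmax⟩ := (B \ A).exists_max_image
        (fun v => g ((insert w B).erase v) + ((-p v : ℝ) : WithBot ℝ)) hne
      have hc : g ((insert w B).erase v₀) ≠ ⊥ := by
        obtain ⟨v, hv, hgv⟩ := hdom A B hA hB hcard w hw
        have := ne_bot_of_le_ne_bot (WithBot.add_ne_bot.2 ⟨hgv, WithBot.coe_ne_bot⟩) (hmax v hv)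
        exact (WithBot.add_ne_bot.1 this).1
      obtain ⟨c, hc⟩ := WithBot.ne_bot_iff_exists.1 hc
      rw [mem_sdiff] at hu hw hv₀
      have hcard' : #A = #((insert w B).erase v₀) := by
        rw [card_erase_of_mem (by simp [hv₀.1]), card_insert_of_notMem hw.2, Nat.add_sub_cancel,
          hcard]
      have hssub := sdiff_erase_insert_ssubset hw.1 hw.2 hv₀.2
      obtain ⟨v, hv, hle⟩ := ih _ (hn ▸ card_lt_card hssub) hcard'
        (by simp [hu.1, hu.2, hwu.symm]) rfl
      obtain ⟨hvv, hvBA⟩ : v ≠ v₀ ∧ v ∈ B \ A := by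
        clear * - hv hw
        grind
      rw [← ha, ← hc] at hle
      have hd := WithBot.add_ne_bot.1 (ne_bot_of_le_ne_bot
        (WithBot.add_ne_bot.2 ⟨WithBot.coe_ne_bot, WithBot.coe_ne_bot⟩) hle)
      have h₁ := (hp v hvBA).1 hd.1
      have h₂ := (hp v hvBA).2
      have h₃ := (hp v₀ (mem_sdiff.2 hv₀)).2
      have h₄ := hmax v hvBA
      rw [mem_sdiff] at hvBA
      have h₅ := add_le_max_of_local_exchange hloc hv₀.1 hvBA.1 hvv.symm hw.2 hu.2 hwu
      rw [← hb, ← hc] at h₅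
      simp only [← hc] at h₄
      generalize g (insert v (A.erase u)) = x at *
      generalize g ((insert u ((insert w B).erase v₀)).erase v) = d at *
      generalize g ((insert w B).erase v) = y at *
      generalize g ((insert u B).erase v₀) = z at *
      generalize g ((insert u B).erase v) = t at *
      obtain ⟨hx, hd⟩ := hd
      lift x to ℝ using hx
      lift d to ℝ using hd
      norm_cast at hle h₁
      have hbd : ((b + d : ℝ) : WithBot ℝ) ≠ ⊥ := WithBot.coe_ne_bot
      rcases le_max_iff.1 h₅ with h | h
      · have hyz := WithBot.add_ne_bot.1 (ne_bot_of_le_ne_bot hbd h)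
        obtain ⟨hy, hz⟩ := hyz
        lift y to ℝ using hy
        lift z to ℝ using hz
        norm_cast at h h₃ h₄
        linarith
      · have ht := (WithBot.add_ne_bot.1 (ne_bot_of_le_ne_bot hbd h)).2
        lift t to ℝ using ht
        norm_cast at h h₂
        linarith
    · push Not at hsub
      obtain ⟨v, hv⟩ := hne
      have hAB := eq_singleton_iff_unique_mem.2 ⟨hu, hsub⟩
      obtain ⟨hAv, hBu⟩ := eq_of_sdiff_eq_singleton hcard hAB hv
      have h := hlt v hv
      rw [hAv, hBu, add_comm] at h
      exact h.false

/-- The exchange property of `f` follows from its local exchange properties, by applying the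
valuated matroid case to `Z ↦ f Z.toLeft` on `N ⊕ ℕ`. -/
theorem mExc_of_local {N : Type*} [DecidableEq N] {f : Finset N → WithBot ℝ}
    (hF : BExc {X : Finset N | f X ≠ ⊥})
    (h₁ : ∀ X : Finset N, ∀ i ∉ X, ∀ j ∉ X, i ≠ j →
      f (insert j (insert i X)) + f X ≤ f (insert i X) + f (insert j X))
    (h₂ : ∀ X : Finset N, ∀ i ∉ X, ∀ j ∉ X, ∀ k ∉ X, i ≠ j → i ≠ k → j ≠ k →
      f (insert j (insert i X)) + f (insert k X) ≤
        max (f (insert k (insert i X)) + f (insert j X))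
          (f (insert k (insert j X)) + f (insert i X)))
    (h₃ : ∀ X : Finset N, ∀ i ∉ X, ∀ j ∉ X, ∀ k ∉ X, ∀ l ∉ X,
      i ≠ j → i ≠ k → i ≠ l → j ≠ k → j ≠ l → k ≠ l →
      f (insert j (insert i X)) + f (insert l (insert k X)) ≤
        max (f (insert k (insert i X)) + f (insert l (insert j X)))
          (f (insert k (insert j X)) + f (insert l (insert i X)))) :
    MExc f := by
  have erase_inl : ∀ (S : Finset (N ⊕ ℕ)) (j : N),
      (S.erase (Sum.inl j)).toLeft = S.toLeft.erase j := fun S j => by ext; simp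
  have erase_inr : ∀ (S : Finset (N ⊕ ℕ)) (m : ℕ),
      (S.erase (Sum.inr m)).toLeft = S.toLeft := fun S m => by ext; simp
  have hloc : ∀ W : Finset (N ⊕ ℕ), ∀ i ∉ W, ∀ j ∉ W, ∀ k ∉ W, ∀ l ∉ W,
      i ≠ j → i ≠ k → i ≠ l → j ≠ k → j ≠ l → k ≠ l →
      f (insert j (insert i W)).toLeft + f (insert l (insert k W)).toLeft ≤
        max (f (insert k (insert i W)).toLeft + f (insert l (insert j W)).toLeft)
          (f (insert k (insert j W)).toLeft + f (insert l (insert i W)).toLeft) := by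
    intro W i hi j hj k hk l hl hij hik hil hjk hjl hkl
    rcases i with i | i <;> rcases j with j | j <;> rcases k with k | k <;> rcases l with l | l <;>
      simp only [toLeft_insert_inl, toLeft_insert_inr, ← mem_toLeft, ne_eq, Sum.inl.injEq] at *
    · exact h₃ _ i hi j hj k hk l hl hij hik hil hjk hjl hkl
    · exact h₂ _ i hi j hj k hk hij hik hjk
    · simpa only [add_comm, max_comm, Finset.insert_comm] using h₂ _ i hi j hj l hl hij hil hjl
    · simpa only [add_comm, max_self] using h₁ _ i hi j hj hij
    · simpa only [add_comm, max_comm, Finset.insert_comm] using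
        h₂ _ k hk l hl i hi hkl (Ne.symm hik) (Ne.symm hil)
    · simp [add_comm]
    · simp
    · simp [add_comm]
    · simpa only [add_comm, max_comm, Finset.insert_comm] using
        h₂ _ k hk l hl j hj hkl (Ne.symm hjk) (Ne.symm hjl)
    · simp [add_comm]
    · simp
    · simp [add_comm]
    · simpa only [add_comm, max_self] using h₁ _ k hk l hl hkl
    · simp [add_comm]
    · simp
    · simp
  have hdom : ∀ A B : Finset (N ⊕ ℕ), f A.toLeft ≠ ⊥ → f B.toLeft ≠ ⊥ → #A = #B →
      ∀ u ∈ A \ B, ∃ v ∈ B \ A, f ((insert u B).erase v).toLeft ≠ ⊥ := by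
    intro A B hA hB hcard u hu
    by_cases hR : B.toRight ⊆ A.toRight
    · have hcardR := card_le_card hR
      have hA' := card_toLeft_add_card_toRight (u := A)
      have hB' := card_toLeft_add_card_toRight (u := B)
      rw [mem_sdiff] at hu
      rcases u with i | m
      · have hstep : f (insert i B.toLeft) ≠ ⊥ →
            ∃ v ∈ B \ A, f ((insert (Sum.inl i) B).erase v).toLeft ≠ ⊥ := by
          intro h
          obtain ⟨j, hj, hjF⟩ := hF.exists_erase_mem hA h
            (by rw [card_insert_of_notMem (by simp [hu.2])]; omega)
          simp only [mem_sdiff, mem_insert, mem_toLeft] at hj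
          refine ⟨Sum.inl j, by grind, ?_⟩
          rwa [erase_inl, toLeft_insert_inl]
        obtain h | ⟨j, hj, -, h⟩ := hF _ hA _ hB i (by simp [hu.1, hu.2])
        · exact hstep h.2
        · refine ⟨Sum.inl j, by simpa using hj, ?_⟩
          rwa [erase_inl, toLeft_insert_inl]
      · have hlt : #B.toRight < #A.toRight := by
          refine card_lt_card ((Finset.ssubset_iff_of_subset hR).2 ⟨m, ?_, ?_⟩)
          · simp [hu.1]
          · simp [hu.2]
        obtain ⟨j, hj, hjF⟩ := hF.exists_erase_mem hA hB (by omega)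
        refine ⟨Sum.inl j, by simpa using hj, ?_⟩
        rwa [erase_inl, toLeft_insert_inr]
    · obtain ⟨m, hmB, hmA⟩ := Finset.not_subset.1 hR
      rw [mem_toRight] at hmB hmA
      rw [mem_sdiff] at hu
      rcases u with i | m'
      · obtain h | ⟨j, hj, -, h⟩ := hF _ hA _ hB i (by simp [hu.1, hu.2])
        · refine ⟨Sum.inr m, mem_sdiff.2 ⟨hmB, hmA⟩, ?_⟩
          rw [erase_inr, toLeft_insert_inl]
          exact h.2
        · refine ⟨Sum.inl j, by simpa using hj, ?_⟩
          rwa [erase_inl, toLeft_insert_inl]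
      · refine ⟨Sum.inr m, mem_sdiff.2 ⟨hmB, hmA⟩, ?_⟩
        rwa [erase_inr, toLeft_insert_inr]
  intro X Y i hi
  obtain ⟨v, hv, hle⟩ := exists_add_le_of_local_exchange (g := fun Z => f Z.toLeft) hloc hdom
    (A := X.disjSum (range #Y)) (B := Y.disjSum (range #X)) (by simp [add_comm])
    (u := Sum.inl i) (by simpa using hi)
  rcases v with j | m
  · simp only [erase_inl, toLeft_insert_inl, toLeft_disjSum] at hle
    exact le_max_of_le_right (hle.trans (Finset.le_sup
      (f := fun j => f (insert j (X.erase i)) + f ((insert i Y).erase j)) (by simpa using hv)))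
  · simp only [erase_inl, erase_inr, toLeft_insert_inl, toLeft_insert_inr, toLeft_disjSum] at hle
    exact le_max_of_le_left hle

theorem mnat_concave_local_characterization {N : Type*} [Fintype N] [DecidableEq N]
    (f : Finset N → WithBot ℝ) (hdom : ∃ X, f X ≠ ⊥) :
    MExc f ↔
      (BExc {X : Finset N | f X ≠ ⊥} ∧
        (∀ X : Finset N, ∀ i ∉ X, ∀ j ∉ X, i ≠ j →
          f (insert j (insert i X)) + f X ≤ f (insert i X) + f (insert j X)) ∧
        (∀ X : Finset N, ∀ i ∉ X, ∀ j ∉ X, ∀ k ∉ X, i ≠ j → i ≠ k → j ≠ k →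
          f (insert j (insert i X)) + f (insert k X) ≤
            max (f (insert k (insert i X)) + f (insert j X))
              (f (insert k (insert j X)) + f (insert i X))) ∧
        (∀ X : Finset N, ∀ i ∉ X, ∀ j ∉ X, ∀ k ∉ X, ∀ l ∉ X,
          i ≠ j → i ≠ k → i ≠ l → j ≠ k → j ≠ l → k ≠ l →
          f (insert j (insert i X)) + f (insert l (insert k X)) ≤
            max (f (insert k (insert i X)) + f (insert l (insert j X)))
              (f (insert k (insert j X)) + f (insert l (insert i X))))) := by
  constructor
  · intro hf
    refine ⟨hf.bExc_dom, fun X i hi j _ hij => hf.insert_insert_add_le hi hij,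
      fun X i hi j _ k hk hij hik hjk => hf.insert_insert_add_insert_le hi hk hij hik hjk,
      fun X i hi j hj k hk l hl hij hik hil hjk hjl hkl =>
        hf.insert_insert_add_insert_insert_le hi hj hk hl hij hik hil hjk hjl hkl⟩
  · rintro ⟨hF, h₁, h₂, h₃⟩
    exact mExc_of_local hF h₁ h₂ h₃
end

section
/- If a set function f : 2^N → ℝ ∪ {-∞} satisfies the multiple exchange property (M♮-EXC_m), then f(X + i + j) + f(X + k) ≤ max[ f(X + i + k) + f(X + j), f(X + j + k) + f(X + i) ] for all X ⊆ N and all distinct i, j, k ∈ N \ X. -/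
open Finset

/-- (M♮-EXC_m): multiple exchange property for set functions. -/
def MExcM {N : Type*} [DecidableEq N] (f : Finset N → WithBot ℝ) : Prop :=
  ∀ X Y : Finset N, ∀ I ⊆ X \ Y, ∃ J ⊆ Y \ X,
    f X + f Y ≤ f ((X \ I) ∪ J) + f ((Y \ J) ∪ I)

theorem mexcm_implies_local_exchange3 {N : Type*} [Fintype N] [DecidableEq N]
    (f : Finset N → WithBot ℝ) (hf : MExcM f) :
    ∀ X : Finset N, ∀ i ∉ X, ∀ j ∉ X, ∀ k ∉ X, i ≠ j → i ≠ k → j ≠ k →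
      f (insert j (insert i X)) + f (insert k X) ≤
        max (f (insert k (insert i X)) + f (insert j X))
          (f (insert k (insert j X)) + f (insert i X)) := by
  intro X i hi j hj k hk hij hik hjk
  have hI : {i} ⊆ insert j (insert i X) \ insert k X := by
    simp [hi, hik]
  obtain ⟨J, hJ, h⟩ := hf _ _ {i} hI
  have hYX : insert k X \ insert j (insert i X) = {k} := by
    grind
  rw [hYX, Finset.subset_singleton_iff] at hJ
  rcases hJ with rfl | rfl
  · have h₁ : (insert j (insert i X) \ {i}) ∪ ∅ = insert j X := by grind
    have h₂ : (insert k X \ ∅) ∪ {i} = insert k (insert i X) := by grind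
    rw [h₁, h₂, add_comm (f (insert j X))] at h
    exact le_max_of_le_left h
  · have h₁ : (insert j (insert i X) \ {i}) ∪ {k} = insert k (insert j X) := by grind
    have h₂ : (insert k X \ {k}) ∪ {i} = insert i X := by grind
    rw [h₁, h₂] at h
    exact le_max_of_le_right h
end
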